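/- arXiv:1406.1936 — 5 statements merged into one kernel-verified Lean document; each statement's English description precedes it below -/
import Mathlib

section
/- (Backward Baum–Welch equation and smoothing factorization.) Define α_N^N(x) = 1 for all x ∈ S, and backwards for 0 ≤ n < N define α_n^N(x) = (1/c_{n+1})·Σ_v α_{n+1}^N(v) ψ_{n+1}(v) Λ(x,v), where c_{n+1} = Σ_{x'} ψ_{n+1}(x')·(Σ_v Λ(v,x') π_n(v)). Then for every 0 ≤ n ≤ N and every x ∈ S the smoothing mass factorizes as π_{n|N}(x) = α_n^N(x)·π_n(x). -/
open Finset

/-- Gaussian observation likelihood `ψ_n(x) = exp(−(y_n − h(x))²/(2γ²))`. -/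
noncomputable def psi {S : Type*} (h : S → ℝ) (γ : ℝ) (y : ℕ → ℝ) (n : ℕ) (x : S) : ℝ :=
  Real.exp (-(y n - h x) ^ 2 / (2 * γ ^ 2))

/-- Joint weight of a path `(x₀,…,x_n)`:
`w_n(x₀,…,x_n) = p₀(x₀)ψ₀(x₀)·∏_{k=1}^{n} Λ(x_{k−1},x_k)ψ_k(x_k)`. -/
noncomputable def pathWeight {S : Type*} [Fintype S] (Λ : S → S → ℝ) (p₀ : S → ℝ)
    (h : S → ℝ) (γ : ℝ) (y : ℕ → ℝ) (n : ℕ) (p : Fin (n + 1) → S) : ℝ :=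
  p₀ (p 0) * psi h γ y 0 (p 0) *
    ∏ k : Fin n, Λ (p k.castSucc) (p k.succ) * psi h γ y (k + 1) (p k.succ)

/-- Filtering mass `π_n(x)`: total weight of paths ending at `x`, normalized. -/
noncomputable def filterMass {S : Type*} [Fintype S] [DecidableEq S] (Λ : S → S → ℝ)
    (p₀ : S → ℝ) (h : S → ℝ) (γ : ℝ) (y : ℕ → ℝ) (n : ℕ) (x : S) : ℝ :=
  (∑ p : Fin (n + 1) → S, if p (Fin.last n) = x then pathWeight Λ p₀ h γ y n p else 0) /
  (∑ p : Fin (n + 1) → S, pathWeight Λ p₀ h γ y n p)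

/-- Smoothing mass `π_{n|N}(x)`: total weight of length-`N` paths whose `n`-th coordinate is
`x`, normalized. -/
noncomputable def smoothMass {S : Type*} [Fintype S] [DecidableEq S] (Λ : S → S → ℝ)
    (p₀ : S → ℝ) (h : S → ℝ) (γ : ℝ) (y : ℕ → ℝ) (N : ℕ) (i : Fin (N + 1)) (x : S) : ℝ :=
  (∑ p : Fin (N + 1) → S, if p i = x then pathWeight Λ p₀ h γ y N p else 0) /
  (∑ p : Fin (N + 1) → S, pathWeight Λ p₀ h γ y N p)

/-!
Let `Z k` be the total weight of the paths up to time `k`. Since `c_{k+1} = Z (k + 1) / Z k`, the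
backward recursion says that `β_k = α_k / Z k` is harmonic for the weighted transitions
`Λ(x, v) ψ_{k+1}(v)`. Hence, for `k ≥ n`, the total weight of the paths up to time `k` that are at
`x` at time `n`, each weighted further by `β_k` at its endpoint, does not depend on `k`. Comparing
`k = N` with `k = n` gives the factorization.
-/

section Weights

variable {S K : Type*} [CommSemiring K] (p₀ : S → K) (Λ : ℕ → S → S → K) (ψ : ℕ → S → K)

/-- Joint weight of the path `p` in the hidden Markov model with initial weights `p₀`,
likelihoods `ψ k`, and time-dependent transition weights `Λ k` from time `k` to time `k + 1`. -/
def hmmWeight (n : ℕ) (p : Fin (n + 1) → S) : K :=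
  p₀ (p 0) * ψ 0 (p 0) * ∏ k : Fin n, Λ k (p k.castSucc) (p k.succ) * ψ (k + 1) (p k.succ)

/-- Evidence of the observations up to time `n`: the total weight of all paths, which is the
normalizing constant of the marginals. -/
def hmmEvidence [Fintype S] (n : ℕ) : K :=
  ∑ p : Fin (n + 1) → S, hmmWeight p₀ Λ ψ n p

/-- Unnormalized marginal: the total weight of the paths up to time `N` that are at `x` at
time `i`. -/
def hmmOccupation [Fintype S] [DecidableEq S] (N : ℕ) (i : Fin (N + 1)) (x : S) : K :=
  ∑ p : Fin (N + 1) → S, if p i = x then hmmWeight p₀ Λ ψ N p else 0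

theorem hmmWeight_snoc (n : ℕ) (p : Fin (n + 1) → S) (v : S) :
    hmmWeight p₀ Λ ψ (n + 1) (Fin.snoc p v : Fin (n + 2) → S) =
      hmmWeight p₀ Λ ψ n p * (Λ n (p (Fin.last n)) v * ψ (n + 1) v) := by
  have snoc_zero : (Fin.snoc p v : Fin (n + 2) → S) 0 = p 0 :=
    Fin.snoc_castSucc (α := fun _ => S) v p 0
  have snoc_succ (k : Fin n) : (Fin.snoc p v : Fin (n + 2) → S) k.castSucc.succ = p k.succ :=
    Fin.snoc_castSucc (α := fun _ => S) v p k.succ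
  simp only [hmmWeight, Fin.prod_univ_castSucc (n := n), Fin.snoc_castSucc, Fin.succ_last,
    Fin.snoc_last, snoc_zero, snoc_succ, Fin.val_castSucc, Fin.val_last, mul_assoc]

theorem sum_hmmWeight_succ_mul [Fintype S] (n : ℕ) (F : (Fin (n + 2) → S) → K) :
    ∑ p, hmmWeight p₀ Λ ψ (n + 1) p * F p =
      ∑ p : Fin (n + 1) → S, hmmWeight p₀ Λ ψ n p *
        ∑ v, Λ n (p (Fin.last n)) v * ψ (n + 1) v * F (Fin.snoc p v) := by
  rw [← (Fin.snocEquiv fun _ : Fin (n + 2) => S).sum_comp, Fintype.sum_prod_type_right]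
  simp only [Fin.snocEquiv, Equiv.coe_fn_mk, hmmWeight_snoc, mul_sum, mul_assoc]

theorem hmmEvidence_succ [Fintype S] (n : ℕ) :
    hmmEvidence p₀ Λ ψ (n + 1) =
      ∑ p : Fin (n + 1) → S, hmmWeight p₀ Λ ψ n p *
        ∑ v, Λ n (p (Fin.last n)) v * ψ (n + 1) v := by
  simpa only [hmmEvidence, mul_one] using sum_hmmWeight_succ_mul p₀ Λ ψ n fun _ => 1

theorem sum_hmmOccupation_mul [Fintype S] [DecidableEq S] (N : ℕ) (i : Fin (N + 1)) (g : S → K) :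
    ∑ x, hmmOccupation p₀ Λ ψ N i x * g x = ∑ p, hmmWeight p₀ Λ ψ N p * g (p i) := by
  simp only [hmmOccupation, sum_mul, ite_mul, zero_mul]
  rw [sum_comm]
  simp only [sum_ite_eq, mem_univ, if_true]

theorem sum_hmmWeight_mul_eq_hmmOccupation_mul [Fintype S] [DecidableEq S] {n N : ℕ}
    (hn : n ≤ N) {β : ℕ → S → K}
    (hβ : ∀ k, n ≤ k → k < N → ∀ x, β k x = ∑ v, Λ k x v * ψ (k + 1) v * β (k + 1) v) (x : S) :
    (∑ p : Fin (N + 1) → S, if p ⟨n, Nat.lt_succ_of_le hn⟩ = x then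
        hmmWeight p₀ Λ ψ N p * β N (p (Fin.last N)) else 0) =
      hmmOccupation p₀ Λ ψ n (Fin.last n) x * β n x := by
  induction N, hn using Nat.le_induction with
  | base =>
    simp only [hmmOccupation, sum_mul, ite_mul, zero_mul]
    refine sum_congr rfl fun p _ => ?_
    exact ite_congr rfl (fun hp => by rw [← hp]) fun _ => rfl
  | succ N hn ih =>
    rw [← ih fun k hnk hkN => hβ k hnk (hkN.trans N.lt_succ_self)]
    have snoc_apply (p : Fin (N + 1) → S) (v : S) :
        (Fin.snoc p v : Fin (N + 2) → S) ⟨n, by omega⟩ = p ⟨n, by omega⟩ :=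
      Fin.snoc_castSucc (α := fun _ => S) v p ⟨n, by omega⟩
    have last_step := sum_hmmWeight_succ_mul p₀ Λ ψ N fun p =>
      if p ⟨n, by omega⟩ = x then β (N + 1) (p (Fin.last (N + 1))) else 0
    simp only [mul_ite, mul_zero, snoc_apply, Fin.snoc_last] at last_step
    rw [last_step]
    refine sum_congr rfl fun p _ => ?_
    split_ifs
    · rw [hβ N hn N.lt_succ_self]
    · simp only [sum_const_zero, mul_zero]

end Weights

section Positivity

variable {S K : Type*} [CommSemiring K] [PartialOrder K] [IsStrictOrderedRing K]
  {p₀ : S → K} {Λ : ℕ → S → S → K} {ψ : ℕ → S → K}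

theorem hmmWeight_nonneg (hp₀ : ∀ x, 0 ≤ p₀ x) (hΛ : ∀ k x v, 0 ≤ Λ k x v)
    (hψ : ∀ k x, 0 ≤ ψ k x) (n : ℕ) (p : Fin (n + 1) → S) : 0 ≤ hmmWeight p₀ Λ ψ n p :=
  mul_nonneg (mul_nonneg (hp₀ _) (hψ _ _)) <|
    prod_nonneg fun _ _ => mul_nonneg (hΛ _ _ _) (hψ _ _)

theorem exists_hmmWeight_pos (hp₀ : ∃ x, 0 < p₀ x) (hΛ : ∀ k x, ∃ v, 0 < Λ k x v)
    (hψ : ∀ k x, 0 < ψ k x) (n : ℕ) : ∃ p, 0 < hmmWeight p₀ Λ ψ n p := by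
  induction n with
  | zero =>
    obtain ⟨x, hx⟩ := hp₀
    exact ⟨fun _ => x, by simpa [hmmWeight] using mul_pos hx (hψ 0 x)⟩
  | succ n ih =>
    obtain ⟨p, hp⟩ := ih
    obtain ⟨v, hv⟩ := hΛ n (p (Fin.last n))
    exact ⟨Fin.snoc p v, by rw [hmmWeight_snoc]; exact mul_pos hp (mul_pos hv (hψ _ v))⟩

theorem hmmEvidence_pos [Fintype S] (hp₀ : ∀ x, 0 ≤ p₀ x) (hp₀_sum : 0 < ∑ x, p₀ x)
    (hΛ : ∀ k x v, 0 ≤ Λ k x v) (hΛ_sum : ∀ k x, 0 < ∑ v, Λ k x v) (hψ : ∀ k x, 0 < ψ k x)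
    (n : ℕ) : 0 < hmmEvidence p₀ Λ ψ n := by
  have exists_pos {f : S → K} (hf : ∀ x, 0 ≤ f x) (hf_sum : 0 < ∑ x, f x) : ∃ x, 0 < f x := by
    simpa using (sum_pos_iff_of_nonneg fun x _ => hf x).1 hf_sum
  obtain ⟨p, hp⟩ := exists_hmmWeight_pos (exists_pos hp₀ hp₀_sum)
    (fun k x => exists_pos (hΛ k x) (hΛ_sum k x)) hψ n
  exact sum_pos' (fun q _ => hmmWeight_nonneg hp₀ hΛ (fun k x => (hψ k x).le) n q)
    ⟨p, mem_univ p, hp⟩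

end Positivity

section Marginals

variable {S K : Type*} [Fintype S] [DecidableEq S] [Field K]
  (p₀ : S → K) (Λ : ℕ → S → S → K) (ψ : ℕ → S → K)

/-- Posterior mass at `x` of the state at time `i`, given the observations up to time `N`: the
filtering mass when `i = N`, a smoothing mass otherwise. -/
def hmmMarginal (N : ℕ) (i : Fin (N + 1)) (x : S) : K :=
  hmmOccupation p₀ Λ ψ N i x / hmmEvidence p₀ Λ ψ N

theorem sum_likelihood_mul_prediction_eq_hmmEvidence_div (n : ℕ) :
    ∑ v, ψ (n + 1) v * ∑ x, Λ n x v * hmmMarginal p₀ Λ ψ n (Fin.last n) x =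
      hmmEvidence p₀ Λ ψ (n + 1) / hmmEvidence p₀ Λ ψ n := by
  rw [hmmEvidence_succ, ← sum_hmmOccupation_mul p₀ Λ ψ n (Fin.last n)
    fun x => ∑ v, Λ n x v * ψ (n + 1) v]
  simp only [hmmMarginal, mul_sum, sum_div]
  rw [sum_comm]
  exact sum_congr rfl fun x _ => sum_congr rfl fun v _ => by ring

theorem backward_baum_welch_general (N : ℕ) (hZ : ∀ n ≤ N, hmmEvidence p₀ Λ ψ n ≠ 0)
    (α : ℕ → S → K) (hαN : ∀ x, α N x = 1)
    (hα_rec : ∀ n, n < N → ∀ x, α n x =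
      (1 / ∑ x', ψ (n + 1) x' * ∑ v, Λ n v x' * hmmMarginal p₀ Λ ψ n (Fin.last n) v) *
        ∑ v, α (n + 1) v * ψ (n + 1) v * Λ n x v)
    (n : ℕ) (hn : n ≤ N) (x : S) :
    hmmMarginal p₀ Λ ψ N ⟨n, Nat.lt_succ_of_le hn⟩ x =
      α n x * hmmMarginal p₀ Λ ψ n (Fin.last n) x := by
  let β (k : ℕ) (z : S) : K := α k z / hmmEvidence p₀ Λ ψ k
  have β_harmonic (k : ℕ) (_ : n ≤ k) (hk : k < N) (z : S) :
      β k z = ∑ v, Λ k z v * ψ (k + 1) v * β (k + 1) v := by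
    have hZk := hZ k hk.le
    calc β k z = (∑ v, α (k + 1) v * ψ (k + 1) v * Λ k z v) / hmmEvidence p₀ Λ ψ (k + 1) := by
          simp only [β, hα_rec k hk, sum_likelihood_mul_prediction_eq_hmmEvidence_div]
          field_simp
      _ = ∑ v, Λ k z v * ψ (k + 1) v * β (k + 1) v := by
          rw [sum_div]
          exact sum_congr rfl fun v _ => by ring
  calc hmmMarginal p₀ Λ ψ N ⟨n, Nat.lt_succ_of_le hn⟩ x
      = ∑ p : Fin (N + 1) → S, if p ⟨n, Nat.lt_succ_of_le hn⟩ = x then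
          hmmWeight p₀ Λ ψ N p * β N (p (Fin.last N)) else 0 := by
        simp only [hmmMarginal, hmmOccupation, β, hαN, sum_div, ite_div, zero_div, mul_one_div]
    _ = hmmOccupation p₀ Λ ψ n (Fin.last n) x * β n x :=
        sum_hmmWeight_mul_eq_hmmOccupation_mul p₀ Λ ψ hn β_harmonic x
    _ = α n x * hmmMarginal p₀ Λ ψ n (Fin.last n) x := by
        simp only [β, hmmMarginal]
        ring

end Marginals

/-- Backward Baum–Welch equation and smoothing factorization: if `α` satisfies `α_N^N ≡ 1`
and the backward recursion `α_n^N(x) = (1/c_{n+1})·Σ_v α_{n+1}^N(v) ψ_{n+1}(v) Λ(x,v)` with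
`c_{n+1} = Σ_{x'} ψ_{n+1}(x')·(Σ_v Λ(v,x') π_n(v))`, then `π_{n|N}(x) = α_n^N(x)·π_n(x)`
for all `0 ≤ n ≤ N` and `x ∈ S`. -/
theorem backward_baum_welch {S : Type*} [Fintype S] [Nonempty S] [DecidableEq S]
    (Λ : S → S → ℝ) (hΛ_nonneg : ∀ v x, 0 ≤ Λ v x) (hΛ_row : ∀ v, ∑ x, Λ v x = 1)
    (p₀ : S → ℝ) (hp₀_nonneg : ∀ x, 0 ≤ p₀ x) (hp₀_sum : ∑ x, p₀ x = 1)
    (h : S → ℝ) (γ : ℝ) (hγ : 0 < γ) (y : ℕ → ℝ) (N : ℕ)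
    (α : ℕ → S → ℝ)
    (hαN : ∀ x, α N x = 1)
    (hα_rec : ∀ n, n < N → ∀ x, α n x =
        (1 / (∑ x', psi h γ y (n + 1) x' * ∑ v, Λ v x' * filterMass Λ p₀ h γ y n v)) *
          ∑ v, α (n + 1) v * psi h γ y (n + 1) v * Λ x v) :
    ∀ n : ℕ, (hn : n ≤ N) → ∀ x : S,
      smoothMass Λ p₀ h γ y N ⟨n, Nat.lt_succ_of_le hn⟩ x
        = α n x * filterMass Λ p₀ h γ y n x := by
  have evidence_pos := hmmEvidence_pos (ψ := psi h γ y) hp₀_nonneg (by simp [hp₀_sum])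
    (fun _ : ℕ => hΛ_nonneg) (by simp [hΛ_row]) fun _ _ => Real.exp_pos _
  exact backward_baum_welch_general p₀ (fun _ => Λ) (psi h γ y) N
    (fun n _ => (evidence_pos n).ne') α hαN hα_rec
end

section
/- (Correctness of the Viterbi algorithm.) Define φ_0(v) = ψ_0(v)·p_0(v) and, for 1 ≤ n ≤ N, φ_n(v) = ψ_n(v)·max_x (Λ(x,v)·φ_{n−1}(x)). Then: (i) max_v φ_N(v) equals the maximum over all paths (x₀,…,x_N) ∈ S^{N+1} of the joint weight p_0(x₀)ψ_0(x₀)·∏_{n=1}^N Λ(x_{n−1},x_n)ψ_n(x_n); and (ii) if V̂_N is any maximizer of φ_N and, for n = N−1 down to 0, V̂_n is any maximizer of v ↦ Λ(v, V̂_{n+1})·φ_n(v), then the joint weight of the path (V̂_0,…,V̂_N) equals max_v φ_N(v), i.e. the backtracked path is a maximizer of the joint weight over all paths. -/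
open Finset

/-- Joint weight of a path `(x₀,…,x_N)`:
`p₀(x₀)ψ₀(x₀)·∏_{n=1}^N Λ(x_{n−1},x_n)ψ_n(x_n)`. -/
noncomputable def jointWeight {S : Type*} [Fintype S] (Λ : S → S → ℝ) (p₀ : S → ℝ)
    (ψ : ℕ → S → ℝ) (N : ℕ) (p : Fin (N + 1) → S) : ℝ :=
  p₀ (p 0) * ψ 0 (p 0) * ∏ k : Fin N, Λ (p k.castSucc) (p k.succ) * ψ (k + 1) (p k.succ)

/-- The Viterbi value function: `φ_0(v) = ψ_0(v)·p_0(v)` and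
`φ_{n+1}(v) = ψ_{n+1}(v)·max_x (Λ(x,v)·φ_n(x))`. -/
noncomputable def viterbiPhi {S : Type*} [Fintype S] [Nonempty S]
    (Λ : S → S → ℝ) (p₀ : S → ℝ) (ψ : ℕ → S → ℝ) : ℕ → S → ℝ
  | 0 => fun v => ψ 0 v * p₀ v
  | (n + 1) => fun v => ψ (n + 1) v *
      Finset.univ.sup' Finset.univ_nonempty (fun x => Λ x v * viterbiPhi Λ p₀ ψ n x)

/-!
The value `φ_N(v)` is the largest joint weight of a path ending at `v`. Nonnegative step weights
preserve inequalities between weights of initial segments, so `φ` bounds every joint weight from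
above. Along a backtracked path each maximum in the recursion is attained, so the bound is an
equality, and backtracking is possible from every endpoint `v`.
-/

section Backtracking

variable {S : Type*} [Fintype S] {Λ : S → S → ℝ} {p₀ : S → ℝ} {ψ : ℕ → S → ℝ} {N : ℕ}

theorem jointWeight_succ (p : Fin (N + 2) → S) :
    jointWeight Λ p₀ ψ (N + 1) p =
      jointWeight Λ p₀ ψ N (Fin.init p) *
        (Λ (p (Fin.last N).castSucc) (p (Fin.last (N + 1))) *
          ψ (N + 1) (p (Fin.last (N + 1)))) := by
  rw [jointWeight, Fin.prod_univ_castSucc, ← mul_assoc]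
  rfl

variable [Nonempty S]

theorem viterbiPhi_succ (n : ℕ) (v : S) :
    viterbiPhi Λ p₀ ψ (n + 1) v =
      ψ (n + 1) v * univ.sup' univ_nonempty (fun x => Λ x v * viterbiPhi Λ p₀ ψ n x) :=
  rfl

theorem jointWeight_zero_eq_viterbiPhi (p : Fin 1 → S) :
    jointWeight Λ p₀ ψ 0 p = viterbiPhi Λ p₀ ψ 0 (p 0) := by
  simp [jointWeight, viterbiPhi, mul_comm]

theorem jointWeight_le_viterbiPhi (hΛ : ∀ v x, 0 ≤ Λ v x) (hψ : ∀ n x, 0 ≤ ψ (n + 1) x)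
    (p : Fin (N + 1) → S) :
    jointWeight Λ p₀ ψ N p ≤ viterbiPhi Λ p₀ ψ N (p (Fin.last N)) := by
  induction N with
  | zero => exact (jointWeight_zero_eq_viterbiPhi p).le
  | succ N ih =>
    set u := p (Fin.last N).castSucc
    set v := p (Fin.last (N + 1))
    calc jointWeight Λ p₀ ψ (N + 1) p
        = jointWeight Λ p₀ ψ N (Fin.init p) * (Λ u v * ψ (N + 1) v) := jointWeight_succ p
      _ ≤ viterbiPhi Λ p₀ ψ N u * (Λ u v * ψ (N + 1) v) :=
          mul_le_mul_of_nonneg_right (ih (Fin.init p)) (mul_nonneg (hΛ u v) (hψ N v))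
      _ = ψ (N + 1) v * (Λ u v * viterbiPhi Λ p₀ ψ N u) := by ring
      _ ≤ viterbiPhi Λ p₀ ψ (N + 1) v :=
          mul_le_mul_of_nonneg_left
            (le_sup' (fun x => Λ x v * viterbiPhi Λ p₀ ψ N x) (mem_univ u)) (hψ N v)

variable (Λ p₀ ψ N) in
/-- A path produced by Viterbi backtracking from its last state: each earlier state attains the
maximum in the recursion for `viterbiPhi` at its successor. The last state is unconstrained, so
that backtracking can be studied from any endpoint. -/
def IsBacktracked (V : Fin (N + 1) → S) : Prop :=
  ∀ n : Fin N,
    Λ (V n.castSucc) (V n.succ) * viterbiPhi Λ p₀ ψ n (V n.castSucc) =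
      univ.sup' univ_nonempty (fun v => Λ v (V n.succ) * viterbiPhi Λ p₀ ψ n v)

theorem isBacktracked_succ_iff {V : Fin (N + 2) → S} :
    IsBacktracked Λ p₀ ψ (N + 1) V ↔
      IsBacktracked Λ p₀ ψ N (Fin.init V) ∧
        Λ (V (Fin.last N).castSucc) (V (Fin.last (N + 1))) *
            viterbiPhi Λ p₀ ψ N (V (Fin.last N).castSucc) =
          univ.sup' univ_nonempty
            (fun v => Λ v (V (Fin.last (N + 1))) * viterbiPhi Λ p₀ ψ N v) :=
  Fin.forall_fin_succ'

theorem IsBacktracked.jointWeight_eq_viterbiPhi {V : Fin (N + 1) → S}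
    (hV : IsBacktracked Λ p₀ ψ N V) :
    jointWeight Λ p₀ ψ N V = viterbiPhi Λ p₀ ψ N (V (Fin.last N)) := by
  induction N with
  | zero => exact jointWeight_zero_eq_viterbiPhi V
  | succ N ih =>
    obtain ⟨hinit, hlast⟩ := isBacktracked_succ_iff.mp hV
    rw [jointWeight_succ, ih hinit, viterbiPhi_succ, ← hlast, Fin.init]
    ring

variable (Λ p₀ ψ N) in
theorem exists_isBacktracked_last_eq (v : S) :
    ∃ V : Fin (N + 1) → S, V (Fin.last N) = v ∧ IsBacktracked Λ p₀ ψ N V := by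
  induction N generalizing v with
  | zero => exact ⟨fun _ => v, rfl, finZeroElim⟩
  | succ N ih =>
    obtain ⟨x, -, hx⟩ := exists_mem_eq_sup' univ_nonempty
      (fun x => Λ x v * viterbiPhi Λ p₀ ψ N x)
    obtain ⟨V, rfl, hV⟩ := ih x
    refine ⟨Fin.snoc (α := fun _ => S) V v, Fin.snoc_last .., isBacktracked_succ_iff.mpr ⟨?_, ?_⟩⟩
    · rwa [Fin.init_snoc]
    · simpa only [Fin.snoc_castSucc, Fin.snoc_last] using hx.symm

theorem isGreatest_viterbiPhi (hΛ : ∀ v x, 0 ≤ Λ v x) (hψ : ∀ n x, 0 ≤ ψ (n + 1) x) (v : S) :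
    IsGreatest (jointWeight Λ p₀ ψ N '' {p | p (Fin.last N) = v}) (viterbiPhi Λ p₀ ψ N v) := by
  constructor
  · obtain ⟨V, rfl, hV⟩ := exists_isBacktracked_last_eq Λ p₀ ψ N v
    exact ⟨V, rfl, hV.jointWeight_eq_viterbiPhi⟩
  · rintro _ ⟨p, rfl, rfl⟩
    exact jointWeight_le_viterbiPhi hΛ hψ p

theorem sup'_viterbiPhi_eq_sup'_jointWeight
    (hΛ : ∀ v x, 0 ≤ Λ v x) (hψ : ∀ n x, 0 ≤ ψ (n + 1) x) :
    univ.sup' univ_nonempty (viterbiPhi Λ p₀ ψ N) =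
      univ.sup' univ_nonempty (jointWeight Λ p₀ ψ N) := by
  apply le_antisymm <;> refine sup'_le _ _ fun a _ => ?_
  · obtain ⟨p, -, hp⟩ := (isGreatest_viterbiPhi (p₀ := p₀) (N := N) hΛ hψ a).1
    exact hp ▸ le_sup' _ (mem_univ p)
  · exact ((isGreatest_viterbiPhi hΛ hψ _).2 ⟨a, rfl, rfl⟩).trans (le_sup' _ (mem_univ _))

end Backtracking

theorem viterbi_correct_general {S : Type*} [Fintype S] [Nonempty S]
    (Λ : S → S → ℝ) (hΛ : ∀ v x, 0 ≤ Λ v x) (p₀ : S → ℝ)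
    (ψ : ℕ → S → ℝ) (hψ : ∀ n x, 0 ≤ ψ (n + 1) x) (N : ℕ) :
    univ.sup' univ_nonempty (viterbiPhi Λ p₀ ψ N) =
        univ.sup' univ_nonempty (jointWeight Λ p₀ ψ N) ∧
      ∀ V : Fin (N + 1) → S,
        viterbiPhi Λ p₀ ψ N (V (Fin.last N)) = univ.sup' univ_nonempty (viterbiPhi Λ p₀ ψ N) →
        IsBacktracked Λ p₀ ψ N V →
        jointWeight Λ p₀ ψ N V = univ.sup' univ_nonempty (viterbiPhi Λ p₀ ψ N) :=
  ⟨sup'_viterbiPhi_eq_sup'_jointWeight hΛ hψ,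
    fun _ hlast hV => hV.jointWeight_eq_viterbiPhi.trans hlast⟩

/-- Correctness of the Viterbi algorithm: (i) `max_v φ_N(v)` equals the maximal joint weight
over all paths; (ii) any backtracked path `V̂` (with `V̂_N` a maximizer of `φ_N` and each `V̂_n`
a maximizer of `v ↦ Λ(v, V̂_{n+1})·φ_n(v)`) achieves joint weight `max_v φ_N(v)`, hence is a
maximizer of the joint weight over all paths. -/
theorem viterbi_correct {S : Type*} [Fintype S] [Nonempty S]
    (Λ : S → S → ℝ) (hΛ : ∀ v x, 0 ≤ Λ v x)
    (p₀ : S → ℝ) (hp₀ : ∀ x, 0 ≤ p₀ x)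
    (ψ : ℕ → S → ℝ) (hψ : ∀ n x, 0 ≤ ψ n x) (N : ℕ) :
    (Finset.univ.sup' Finset.univ_nonempty (viterbiPhi Λ p₀ ψ N)
      = Finset.univ.sup' Finset.univ_nonempty
          (fun p : Fin (N + 1) → S => jointWeight Λ p₀ ψ N p))
    ∧ ∀ V : Fin (N + 1) → S,
        viterbiPhi Λ p₀ ψ N (V (Fin.last N))
            = Finset.univ.sup' Finset.univ_nonempty (viterbiPhi Λ p₀ ψ N) →
        (∀ n : Fin N,
          Λ (V n.castSucc) (V n.succ) * viterbiPhi Λ p₀ ψ (n : ℕ) (V n.castSucc)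
            = Finset.univ.sup' Finset.univ_nonempty
                (fun v => Λ v (V n.succ) * viterbiPhi Λ p₀ ψ (n : ℕ) v)) →
        jointWeight Λ p₀ ψ N V
          = Finset.univ.sup' Finset.univ_nonempty (viterbiPhi Λ p₀ ψ N) :=
  viterbi_correct_general Λ hΛ p₀ ψ (fun n => hψ (n + 1)) N
end

section
/- (Explicit solution and stability of the Kalman–Bucy Riccati equation with constant coefficients.) Let a, σ, h, γ, Σ₀ ∈ ℝ with γ > 0, σ > 0, h ≠ 0 and Σ₀ ≥ 0. Set r = γ·√(a²γ² + h²σ²), α₁ = (aγ² − r)/h², α₂ = (aγ² + r)/h², assume Σ₀ ≠ α₂, and set K = (Σ₀ − α₁)/(Σ₀ − α₂) and λ = (h²/γ²)·(α₂ − α₁). Define Σ : ℝ → ℝ by Σ(t) = (α₁ − K·α₂·e^{λt}) / (1 − K·e^{λt}). Then: (i) 1 − K·e^{λt} ≠ 0 for all t ≥ 0; (ii) Σ(0) = Σ₀; (iii) for all t ≥ 0, Σ is differentiable at t with Σ′(t) = 2a·Σ(t) − (h²/γ²)·Σ(t)² + σ²; and (iv) Σ(t) → α₂ as t → ∞. 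-/
open Real Filter Topology

/-!
Let `α < β` be the roots of the right-hand side, so that the equation is `y' = -c (y - α) (y - β)`.
The Möbius coordinate `w = (y - α) / (y - β)` linearizes it to `w' = c (β - α) w`, whence
`w = K e^{λ t}`. Inverting the coordinate gives the explicit solution. Since `w = ∞` corresponds to
`y = β` and `w = 1` to `y = ∞`, convergence to `β` is the divergence of `K e^{λ t}`, and the
solution does not blow up because `α < y 0` puts `K` outside `[0, 1]`.
-/

section Field

variable {F : Type*} [Field F]

/-- The Möbius coordinate sending `α` to `0`, `β` to `∞` and `∞` to `1`. It linearizes the Riccati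
equation with constant solutions `α` and `β`. At `y = β` it takes the junk value `0`. -/
def rootRatio (α β y : F) : F := (y - α) / (y - β)

/-- The inverse Möbius transformation of `rootRatio α β`, which recovers a solution of the Riccati
equation from its linearizing coordinate. At `w = 1` it takes the junk value `0`. -/
def ofRootRatio (α β w : F) : F := (α - β * w) / (1 - w)

theorem ofRootRatio_rootRatio {α β y : F} (hαβ : α ≠ β) (hy : y ≠ β) :
    ofRootRatio α β (rootRatio α β y) = y := by
  have hyβ : y - β ≠ 0 := sub_ne_zero.2 hy
  have hαβ' : α - β ≠ 0 := sub_ne_zero.2 hαβ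
  have hden : 1 - rootRatio α β y = (α - β) / (y - β) := by
    rw [rootRatio]; field_simp; ring
  rw [ofRootRatio, hden, rootRatio]
  field_simp
  ring

theorem ofRootRatio_sub_left {α β w : F} (hw : w ≠ 1) :
    ofRootRatio α β w - α = (α - β) * w / (1 - w) := by
  have : 1 - w ≠ 0 := sub_ne_zero.2 hw.symm
  rw [ofRootRatio]; field_simp; ring

theorem ofRootRatio_sub_right {α β w : F} (hw : w ≠ 1) :
    ofRootRatio α β w - β = (α - β) / (1 - w) := by
  have : 1 - w ≠ 0 := sub_ne_zero.2 hw.symm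
  rw [ofRootRatio]; field_simp; ring

end Field

theorem rootRatio_mul_ne_one {F : Type*} [Field F] [LinearOrder F] [IsStrictOrderedRing F]
    {α β y E : F} (hαβ : α < β) (hα : α ≤ y) (hβ : y ≠ β) (hE : 1 ≤ E) :
    rootRatio α β y * E ≠ 1 := by
  rcases hβ.lt_or_gt with hy | hy
  · have hK : rootRatio α β y ≤ 0 :=
      div_nonpos_of_nonneg_of_nonpos (sub_nonneg.2 hα) (sub_nonpos.2 hy.le)
    exact ((mul_nonpos_of_nonpos_of_nonneg hK (zero_le_one.trans hE)).trans_lt one_pos).ne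
  · have hK : 1 < rootRatio α β y :=
      (one_lt_div (sub_pos.2 hy)).2 (sub_lt_sub_left hαβ y)
    exact (one_lt_mul_of_lt_of_le hK hE).ne'

theorem tendsto_ofRootRatio_cobounded {𝕜 : Type*} [NormedField 𝕜] (α β : 𝕜) :
    Tendsto (ofRootRatio α β) (Bornology.cobounded 𝕜) (𝓝 β) := by
  have hinv : Tendsto (fun w : 𝕜 ↦ (1 - w)⁻¹) (Bornology.cobounded 𝕜) (𝓝 0) :=
    tendsto_inv₀_cobounded.comp (tendsto_const_sub_cobounded 1)
  have hlim : Tendsto (fun w ↦ β + (α - β) * (1 - w)⁻¹) (Bornology.cobounded 𝕜) (𝓝 β) := by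
    simpa using (hinv.const_mul (α - β)).const_add β
  refine hlim.congr' ?_
  filter_upwards [Bornology.eventually_ne_cobounded 1] with w hw
  rw [← div_eq_mul_inv, ← ofRootRatio_sub_right hw, add_sub_cancel]

section NontriviallyNormedField

variable {𝕜 : Type*} [NontriviallyNormedField 𝕜]

theorem hasDerivAt_ofRootRatio (α β : 𝕜) {w : 𝕜} (hw : w ≠ 1) :
    HasDerivAt (ofRootRatio α β) ((α - β) / (1 - w) ^ 2) w := by
  have hden : 1 - w ≠ 0 := sub_ne_zero.2 hw.symm
  have hnum' : HasDerivAt (fun w ↦ α - β * w) (-β) w := by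
    simpa using ((hasDerivAt_id w).const_mul β).const_sub α
  have hden' : HasDerivAt (fun w ↦ 1 - w) (-1) w := (hasDerivAt_id w).const_sub 1
  refine (hnum'.fun_div hden' hden).congr_deriv ?_
  congr 1
  ring

theorem hasDerivAt_ofRootRatio_comp {α β c t : 𝕜} {w : 𝕜 → 𝕜}
    (hw : HasDerivAt w (c * (β - α) * w t) t) (hwt : w t ≠ 1) :
    HasDerivAt (fun s ↦ ofRootRatio α β (w s))
      (-(c * (ofRootRatio α β (w t) - α) * (ofRootRatio α β (w t) - β))) t := by
  refine ((hasDerivAt_ofRootRatio α β hwt).comp t hw).congr_deriv ?_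
  have : 1 - w t ≠ 0 := sub_ne_zero.2 hwt.symm
  rw [ofRootRatio_sub_left hwt, ofRootRatio_sub_right hwt]
  field_simp
  ring

end NontriviallyNormedField

theorem hasDerivAt_const_mul_exp_const_mul (K lam t : ℝ) :
    HasDerivAt (fun s ↦ K * exp (lam * s)) (lam * (K * exp (lam * t))) t := by
  refine (((hasDerivAt_id t).const_mul lam).exp.const_mul K).congr_deriv ?_
  simp only [id]
  ring

theorem tendsto_const_mul_exp_const_mul_cobounded {K lam : ℝ} (hK : K ≠ 0) (hlam : 0 < lam) :
    Tendsto (fun t ↦ K * exp (lam * t)) atTop (Bornology.cobounded ℝ) := by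
  have hexp : Tendsto (fun t ↦ exp (lam * t)) atTop atTop :=
    tendsto_exp_atTop.comp (tendsto_id.const_mul_atTop hlam)
  exact (tendsto_mul_left_cobounded hK).comp (hexp.mono_right IsOrderBornology.atTop_le_cobounded)

theorem riccati_explicit_solution_and_stability_general
    {b c q α β y₀ K lam : ℝ} {y : ℝ → ℝ} (hc : 0 < c)
    (hroots : ∀ x, b * x - c * x ^ 2 + q = -(c * (x - α) * (x - β)))
    (hαβ : α < β) (hα : α < y₀) (hβ : y₀ ≠ β)
    (hK : K = (y₀ - α) / (y₀ - β)) (hlam : lam = c * (β - α))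
    (hy : ∀ t, y t = (α - K * β * exp (lam * t)) / (1 - K * exp (lam * t))) :
    (∀ t ≥ 0, 1 - K * exp (lam * t) ≠ 0)
    ∧ y 0 = y₀
    ∧ (∀ t ≥ 0, HasDerivAt y (b * y t - c * y t ^ 2 + q) t)
    ∧ Tendsto y atTop (𝓝 β) := by
  have hlam_pos : 0 < lam := hlam ▸ mul_pos hc (sub_pos.2 hαβ)
  have hK_ne : K ≠ 0 := hK ▸ div_ne_zero (sub_pos.2 hα).ne' (sub_ne_zero.2 hβ)
  have hy_eq : y = fun t ↦ ofRootRatio α β (K * exp (lam * t)) := by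
    funext t; rw [hy, ofRootRatio, mul_left_comm, mul_assoc]
  have hw (t : ℝ) (ht : 0 ≤ t) : K * exp (lam * t) ≠ 1 :=
    hK ▸ rootRatio_mul_ne_one hαβ hα.le hβ (one_le_exp (mul_nonneg hlam_pos.le ht))
  refine ⟨fun t ht ↦ sub_ne_zero.2 (hw t ht).symm, ?_, fun t ht ↦ ?_, ?_⟩
  · simpa [hy_eq, hK, rootRatio] using ofRootRatio_rootRatio hαβ.ne hβ
  · rw [hroots, hy_eq]
    exact hasDerivAt_ofRootRatio_comp (hlam ▸ hasDerivAt_const_mul_exp_const_mul K lam t) (hw t ht)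
  · rw [hy_eq]
    exact (tendsto_ofRootRatio_cobounded α β).comp
      (tendsto_const_mul_exp_const_mul_cobounded hK_ne hlam_pos)

section KalmanBucy

/-- The unstable equilibrium `α₁` of the Kalman–Bucy Riccati equation. -/
noncomputable def kalmanBucyLowerRoot (a σ h γ : ℝ) : ℝ :=
  (a * γ ^ 2 - γ * √(a ^ 2 * γ ^ 2 + h ^ 2 * σ ^ 2)) / h ^ 2

/-- The stable equilibrium `α₂` of the Kalman–Bucy Riccati equation: the steady-state posterior
variance. -/
noncomputable def kalmanBucyUpperRoot (a σ h γ : ℝ) : ℝ :=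
  (a * γ ^ 2 + γ * √(a ^ 2 * γ ^ 2 + h ^ 2 * σ ^ 2)) / h ^ 2

variable {a σ h γ : ℝ}

theorem kalmanBucy_drift_eq_neg_mul_sub_mul_sub (hγ : γ ≠ 0) (hh : h ≠ 0) (x : ℝ) :
    2 * a * x - h ^ 2 / γ ^ 2 * x ^ 2 + σ ^ 2 =
      -(h ^ 2 / γ ^ 2 * (x - kalmanBucyLowerRoot a σ h γ) *
        (x - kalmanBucyUpperRoot a σ h γ)) := by
  have hsq : √(a ^ 2 * γ ^ 2 + h ^ 2 * σ ^ 2) ^ 2 = a ^ 2 * γ ^ 2 + h ^ 2 * σ ^ 2 :=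
    sq_sqrt (by positivity)
  rw [kalmanBucyLowerRoot, kalmanBucyUpperRoot]
  field_simp
  linear_combination -γ ^ 2 * hsq

theorem kalmanBucy_lowerRoot_lt_upperRoot (hγ : 0 < γ) (hσ : σ ≠ 0) (hh : h ≠ 0) :
    kalmanBucyLowerRoot a σ h γ < kalmanBucyUpperRoot a σ h γ := by
  have hr : 0 < γ * √(a ^ 2 * γ ^ 2 + h ^ 2 * σ ^ 2) := by positivity
  rw [kalmanBucyLowerRoot, kalmanBucyUpperRoot]
  gcongr
  linarith

theorem kalmanBucy_lowerRoot_neg (hγ : 0 < γ) (hσ : σ ≠ 0) (hh : h ≠ 0) :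
    kalmanBucyLowerRoot a σ h γ < 0 := by
  have hsqrt : a * γ < √(a ^ 2 * γ ^ 2 + h ^ 2 * σ ^ 2) := by
    apply lt_sqrt_of_sq_lt
    rw [mul_pow]
    exact lt_add_of_pos_right _ (by positivity)
  refine div_neg_of_neg_of_pos ?_ (by positivity)
  linear_combination γ * hsqrt

end KalmanBucy

/-- Explicit solution and stability of the Kalman–Bucy Riccati equation with constant
coefficients: with `r = γ√(a²γ² + h²σ²)`, `α₁ = (aγ² − r)/h²`, `α₂ = (aγ² + r)/h²`,
`K = (S₀ − α₁)/(S₀ − α₂)`, `λ = (h²/γ²)(α₂ − α₁)`, the function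
`Σ(t) = (α₁ − Kα₂e^{λt})/(1 − Ke^{λt})` has nonvanishing denominator on `t ≥ 0`, starts at
`S₀`, solves `Σ′ = 2aΣ − (h²/γ²)Σ² + σ²`, and converges to `α₂` as `t → ∞`. -/
theorem riccati_explicit_solution_and_stability
    (a σ h γ S₀ : ℝ) (hγ : 0 < γ) (hσ : 0 < σ) (hh : h ≠ 0) (hS₀ : 0 ≤ S₀)
    (r α₁ α₂ K lam : ℝ)
    (hr : r = γ * Real.sqrt (a ^ 2 * γ ^ 2 + h ^ 2 * σ ^ 2))
    (hα₁ : α₁ = (a * γ ^ 2 - r) / h ^ 2)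
    (hα₂ : α₂ = (a * γ ^ 2 + r) / h ^ 2)
    (hne : S₀ ≠ α₂)
    (hK : K = (S₀ - α₁) / (S₀ - α₂))
    (hlam : lam = (h ^ 2 / γ ^ 2) * (α₂ - α₁))
    (Sg : ℝ → ℝ)
    (hSg : ∀ t, Sg t = (α₁ - K * α₂ * Real.exp (lam * t)) / (1 - K * Real.exp (lam * t))) :
    (∀ t ≥ (0 : ℝ), 1 - K * Real.exp (lam * t) ≠ 0)
    ∧ Sg 0 = S₀
    ∧ (∀ t ≥ (0 : ℝ), HasDerivAt Sg (2 * a * Sg t - (h ^ 2 / γ ^ 2) * (Sg t) ^ 2 + σ ^ 2) t)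
    ∧ Tendsto Sg atTop (𝓝 α₂) := by
  subst hr hα₁ hα₂
  exact riccati_explicit_solution_and_stability_general (by positivity)
    (kalmanBucy_drift_eq_neg_mul_sub_mul_sub hγ.ne' hh)
    (kalmanBucy_lowerRoot_lt_upperRoot hγ hσ.ne' hh)
    ((kalmanBucy_lowerRoot_neg hγ hσ.ne' hh).trans_le hS₀) hne hK hlam hSg
end

section
/- (Consistency of sequential importance sampling.) Let (Ω, 𝓕, P) be a probability space, E a measurable space, and (Z_ℓ)_{ℓ∈ℕ} an i.i.d. sequence of E-valued random variables. Let g : E → ℝ be bounded and measurable and w : E → ℝ be measurable with w ≥ 0, w(Z₀) integrable, and E[w(Z₀)] > 0. Then, almost surely, (Σ_{ℓ=0}^{P−1} g(Z_ℓ)·w(Z_ℓ)) / (Σ_{ℓ=0}^{P−1} w(Z_ℓ)) → E[g(Z₀)·w(Z₀)] / E[w(Z₀)] as P → ∞. -/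
open MeasureTheory ProbabilityTheory Filter Topology Finset

/-!
Multiplying numerator and denominator of the self-normalized estimate by `1 / P` turns it into a
quotient of two empirical means along the particles, of `w • g` and of `w`. By the strong law of
large numbers both converge almost surely, and the limit of the denominator does not vanish.
-/

theorem tendsto_inv_smul_of_tendsto_smul {ι 𝕜 V : Type*} [DivisionRing 𝕜] [TopologicalSpace 𝕜]
    [T1Space 𝕜] [ContinuousInv₀ 𝕜] [AddCommGroup V] [Module 𝕜 V] [TopologicalSpace V]
    [ContinuousSMul 𝕜 V] {l : Filter ι} {c a : ι → 𝕜} {b : ι → V} {A : 𝕜} {B : V}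
    (ha : Tendsto (fun i ↦ c i * a i) l (𝓝 A)) (hb : Tendsto (fun i ↦ c i • b i) l (𝓝 B))
    (hA : A ≠ 0) :
    Tendsto (fun i ↦ (a i)⁻¹ • b i) l (𝓝 (A⁻¹ • B)) := by
  refine ((ha.inv₀ hA).smul hb).congr' ?_
  filter_upwards [ha.eventually_ne hA] with i hi
  rw [smul_smul, mul_inv_rev, inv_mul_cancel_right₀ (left_ne_zero_of_mul hi)]

section

variable {Ω E V : Type*} {mΩ : MeasurableSpace Ω} {μ : Measure Ω} {mE : MeasurableSpace E}
  [NormedAddCommGroup V] [NormedSpace ℝ V] [CompleteSpace V] {Z : ℕ → Ω → E}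

theorem strong_law_ae_comp {f : E → V} (hZ_indep : Pairwise fun i j ↦ IndepFun (Z i) (Z j) μ)
    (hZ_ident : ∀ i, IdentDistrib (Z i) (Z 0) μ μ) (hf : Integrable f (μ.map (Z 0))) :
    ∀ᵐ ω ∂μ, Tendsto (fun n : ℕ ↦ (n : ℝ)⁻¹ • ∑ i ∈ range n, f (Z i ω)) atTop
      (𝓝 (∫ ω, f (Z 0 ω) ∂μ)) := by
  borelize V
  have hf_meas (i : ℕ) : AEMeasurable f (μ.map (Z i)) :=
    (hZ_ident i).map_eq ▸ hf.aemeasurable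
  have hZ_meas (i : ℕ) : AEMeasurable (Z i) μ := (hZ_ident i).aemeasurable_fst
  exact strong_law_ae (fun i ↦ f ∘ Z i) (hf.comp_aemeasurable (hZ_meas 0))
    (fun i j hij ↦ (hZ_indep hij).comp₀ (hZ_meas i) (hZ_meas j) (hf_meas i) (hf_meas j))
    (fun i ↦ (hZ_ident i).comp_of_aemeasurable (hf_meas i))

theorem sis_consistency_general {w : E → ℝ} {g : E → V}
    (hZ_indep : Pairwise fun i j ↦ IndepFun (Z i) (Z j) μ)
    (hZ_ident : ∀ i, IdentDistrib (Z i) (Z 0) μ μ) (hw : Integrable w (μ.map (Z 0)))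
    (hwg : Integrable (fun x ↦ w x • g x) (μ.map (Z 0))) (hw_ne : ∫ ω, w (Z 0 ω) ∂μ ≠ 0) :
    ∀ᵐ ω ∂μ, Tendsto
      (fun n : ℕ ↦ (∑ i ∈ range n, w (Z i ω))⁻¹ • ∑ i ∈ range n, w (Z i ω) • g (Z i ω)) atTop
      (𝓝 ((∫ ω, w (Z 0 ω) ∂μ)⁻¹ • ∫ ω, w (Z 0 ω) • g (Z 0 ω) ∂μ)) := by
  filter_upwards [strong_law_ae_comp hZ_indep hZ_ident hw,
    strong_law_ae_comp hZ_indep hZ_ident hwg] with ω hω_weight hω_weighted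
  exact tendsto_inv_smul_of_tendsto_smul hω_weight hω_weighted hw_ne

end

/-- Consistency of sequential importance sampling: for an i.i.d. sequence of particles
`Z_ℓ`, a bounded measurable test function `g` and a nonnegative measurable weight `w` with
`w(Z₀)` integrable and `E[w(Z₀)] > 0`, the self-normalized importance-sampling estimate
converges almost surely to `E[g(Z₀)w(Z₀)] / E[w(Z₀)]`. -/
theorem sis_consistency
    {Ω : Type*} {F : MeasurableSpace Ω} {μ : Measure Ω} [IsProbabilityMeasure μ]
    {E : Type*} {mE : MeasurableSpace E}
    (Z : ℕ → Ω → E) (hZ_meas : ∀ ℓ, Measurable (Z ℓ))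
    (hZ_indep : iIndepFun (m := fun _ => mE) Z μ)
    (hZ_ident : ∀ ℓ, IdentDistrib (Z ℓ) (Z 0) μ μ)
    (g : E → ℝ) (hg_meas : Measurable g) (hg_bdd : ∃ C, ∀ x, |g x| ≤ C)
    (w : E → ℝ) (hw_meas : Measurable w) (hw_nonneg : ∀ x, 0 ≤ w x)
    (hw_int : Integrable (fun ω => w (Z 0 ω)) μ)
    (hw_pos : 0 < ∫ ω, w (Z 0 ω) ∂μ) :
    ∀ᵐ ω ∂μ, Tendsto
      (fun P : ℕ => (∑ ℓ ∈ Finset.range P, g (Z ℓ ω) * w (Z ℓ ω))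
          / (∑ ℓ ∈ Finset.range P, w (Z ℓ ω)))
      atTop (𝓝 ((∫ ω', g (Z 0 ω') * w (Z 0 ω') ∂μ) / (∫ ω', w (Z 0 ω') ∂μ))) := by
  obtain ⟨C, hC⟩ := hg_bdd
  have hw : Integrable w (μ.map (Z 0)) :=
    (integrable_map_measure hw_meas.aestronglyMeasurable (hZ_meas 0).aemeasurable).2 hw_int
  simpa only [div_eq_inv_mul, smul_eq_mul, mul_comm (g _)] using
    sis_consistency_general (fun _ _ hij ↦ hZ_indep.indepFun hij) hZ_ident hw
      (hw.smul_bdd C hg_meas.aestronglyMeasurable (ae_of_all _ hC)) hw_pos.ne'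
end

section
/- (Positivity-preserving implicit Alfonsi scheme for the CIR process.) Let ν > 0, x̄ > 0, γ ≥ 0, Δt ≥ 0 with ν·Δt ≤ 1 and γ² ≤ 2·ν·x̄, and let x ≥ 0 and b ∈ ℝ. Set D = (1 − ν·Δt)·x + (ν·x̄ − γ²/2)·Δt and s = (γ·b + √(γ²·b² + 4·D))/2. Then D ≥ 0, s ≥ 0, and s² = (1 − ν·Δt)·x + (ν·x̄ − γ²/2)·Δt + γ·s·b; that is, X_{n+1} := s² is a nonnegative solution of the implicit discretization X_{n+1} = X_n(1 − νΔt) + (νx̄ − γ²/2)Δt + γ·√(X_{n+1})·ΔB_n with X_n = x and ΔB_n = b. -/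
/-- The larger root of `s ^ 2 = q + p * s`. With `p = γ * ΔB` and `q` the part of the implicit step
that does not involve the noise, it is the value of `√X` after the step. If the discriminant
`p ^ 2 + 4 * q` is negative, it is the junk value `p / 2`. -/
noncomputable def largerRoot (p q : ℝ) : ℝ := (p + √(p ^ 2 + 4 * q)) / 2

theorem largerRoot_nonneg (p : ℝ) {q : ℝ} (hq : 0 ≤ q) : 0 ≤ largerRoot p q := by
  have abs_le_sqrt : |p| ≤ √(p ^ 2 + 4 * q) := Real.abs_le_sqrt (by linarith)
  have neg_le_sqrt : -p ≤ √(p ^ 2 + 4 * q) := (neg_le_abs p).trans abs_le_sqrt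
  unfold largerRoot
  linarith

theorem largerRoot_sq {p q : ℝ} (hdiscrim : 0 ≤ p ^ 2 + 4 * q) :
    largerRoot p q ^ 2 = q + p * largerRoot p q := by
  unfold largerRoot
  linear_combination Real.sq_sqrt hdiscrim / 4

/-- The noise-free part of the implicit step of length `Δt` from `x` for the Itô equation
`dX = (a - κ X) dt + γ √X dB`. The correction `-γ ^ 2 / 2` comes from evaluating `√X` at the end of
the step. The CIR process with speed `ν` and mean `x̄` is the case `a = ν * x̄`, `κ = ν`; keeping
`a` and `κ` separate also covers `κ ≤ 0`, for instance squared Bessel processes (`κ = 0`). -/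
noncomputable def driftStep (a κ γ Δt x : ℝ) : ℝ :=
  (1 - κ * Δt) * x + (a - γ ^ 2 / 2) * Δt

theorem driftStep_nonneg {a κ γ Δt x : ℝ} (hΔt : 0 ≤ Δt) (hstep : κ * Δt ≤ 1)
    (hFeller : γ ^ 2 ≤ 2 * a) (hx : 0 ≤ x) : 0 ≤ driftStep a κ γ Δt x :=
  add_nonneg (mul_nonneg (by linarith) hx) (mul_nonneg (by linarith) hΔt)

theorem alfonsi_implicit_scheme_positive_general {a κ γ Δt x : ℝ} (b : ℝ) (hΔt : 0 ≤ Δt)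
    (hstep : κ * Δt ≤ 1) (hFeller : γ ^ 2 ≤ 2 * a) (hx : 0 ≤ x) :
    0 ≤ driftStep a κ γ Δt x
    ∧ 0 ≤ largerRoot (γ * b) (driftStep a κ γ Δt x)
    ∧ largerRoot (γ * b) (driftStep a κ γ Δt x) ^ 2
      = driftStep a κ γ Δt x + γ * largerRoot (γ * b) (driftStep a κ γ Δt x) * b := by
  have drift_nonneg : 0 ≤ driftStep a κ γ Δt x := driftStep_nonneg hΔt hstep hFeller hx
  refine ⟨drift_nonneg, largerRoot_nonneg (γ * b) drift_nonneg, ?_⟩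
  rw [mul_right_comm γ _ b]
  exact largerRoot_sq (by positivity)

/-- Positivity-preserving implicit Alfonsi scheme for the CIR process: under the Feller-type
condition `γ² ≤ 2νx̄` and `νΔt ≤ 1`, the quantity
`s = (γb + √(γ²b² + 4D))/2` with `D = (1 − νΔt)x + (νx̄ − γ²/2)Δt` is a nonnegative root of
the implicit step, i.e. `D ≥ 0`, `s ≥ 0`, and
`s² = (1 − νΔt)x + (νx̄ − γ²/2)Δt + γ·s·b`. -/
theorem alfonsi_implicit_scheme_positive
    (ν xbar γ Δt x b : ℝ)
    (hν : 0 < ν) (hxbar : 0 < xbar) (hγ : 0 ≤ γ) (hΔt : 0 ≤ Δt)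
    (hstep : ν * Δt ≤ 1) (hFeller : γ ^ 2 ≤ 2 * ν * xbar) (hx : 0 ≤ x) :
    0 ≤ (1 - ν * Δt) * x + (ν * xbar - γ ^ 2 / 2) * Δt
    ∧ 0 ≤ (γ * b + Real.sqrt (γ ^ 2 * b ^ 2 +
        4 * ((1 - ν * Δt) * x + (ν * xbar - γ ^ 2 / 2) * Δt))) / 2
    ∧ ((γ * b + Real.sqrt (γ ^ 2 * b ^ 2 +
        4 * ((1 - ν * Δt) * x + (ν * xbar - γ ^ 2 / 2) * Δt))) / 2) ^ 2
      = (1 - ν * Δt) * x + (ν * xbar - γ ^ 2 / 2) * Δt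
        + γ * ((γ * b + Real.sqrt (γ ^ 2 * b ^ 2 +
            4 * ((1 - ν * Δt) * x + (ν * xbar - γ ^ 2 / 2) * Δt))) / 2) * b := by
  simpa only [driftStep, largerRoot, mul_pow] using
    alfonsi_implicit_scheme_positive_general b hΔt hstep (hFeller.trans_eq (mul_assoc 2 ν xbar)) hx
end
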